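/- arXiv:2301.01167 — 5 statements merged into one kernel-verified Lean document; each statement's English description precedes it below -/
import Mathlib

section
/- Let G be a finite connected simple graph on a vertex set V with n = |V| ≥ 1 vertices, L its graph Laplacian matrix, and p : V → ℝ. Suppose x : ℝ → (V → ℝ) is differentiable, x(0) = 0, and x'(t) = p − L·x(t) for all t ≥ 0. Then x'(t) converges as t → +∞ to the constant vector each of whose entries equals (Σ_{v∈V} p(v))/n. -/
open Matrix Filter

/-- Along an eigenvector `w` of the Laplacian, the estimator's residual decays exponentially. -/
theorem coord_decay {V : Type*} [Fintype V] [DecidableEq V] (L : Matrix V V ℝ) (hL : L.IsSymm)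
    (p : V → ℝ) (x : ℝ → V → ℝ)
    (hdiff : Differentiable ℝ x) (h0 : x 0 = 0)
    (hode : ∀ t : ℝ, 0 ≤ t → deriv x t = p - L *ᵥ x t)
    (w : V → ℝ) (l : ℝ) (hw : L *ᵥ w = l • w) (t : ℝ) (ht : 0 ≤ t) :
    w ⬝ᵥ (p - L *ᵥ x t) = Real.exp (-(l * t)) * (w ⬝ᵥ p) := by
  have key : ∀ z : V → ℝ, w ⬝ᵥ (L *ᵥ z) = l * (w ⬝ᵥ z) := by
    intro z
    rw [dotProduct_mulVec, ← mulVec_transpose, hL.eq, hw, smul_dotProduct, smul_eq_mul]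
  have hd : ∀ s, HasDerivAt (fun s => w ⬝ᵥ x s) (w ⬝ᵥ deriv x s) s := by
    intro s
    have := hasDerivAt_pi.1 (hdiff s).hasDerivAt
    simp only [dotProduct]
    exact HasDerivAt.fun_sum fun i _ => (this i).const_mul (w i)
  let g : ℝ → ℝ := fun s => Real.exp (l * s) * (w ⬝ᵥ p - l * (w ⬝ᵥ x s))
  have hg : ∀ s, HasDerivAt g (Real.exp (l * s) * l * (w ⬝ᵥ p - l * (w ⬝ᵥ x s))
      + Real.exp (l * s) * (-(l * (w ⬝ᵥ deriv x s)))) s := by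
    intro s
    have h1 : HasDerivAt (fun s => Real.exp (l * s)) (Real.exp (l * s) * l) s := by
      simpa using ((hasDerivAt_id s).const_mul l).exp
    exact h1.mul (((hd s).const_mul l).const_sub _)
  have hconst : g t = g 0 := by
    refine constant_of_has_deriv_right_zero (a := 0) (b := t)
      (fun s _ => (hg s).continuousAt.continuousWithinAt) ?_ t ⟨ht, le_rfl⟩
    intro s hs
    have := hg s
    rw [hode s hs.1, dotProduct_sub, key] at this
    convert this.hasDerivWithinAt using 1
    ring
  have h2 : Real.exp (l * t) * (w ⬝ᵥ p - l * (w ⬝ᵥ x t)) = w ⬝ᵥ p := by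
    simpa [g, h0] using hconst
  rw [dotProduct_sub, key, ← h2, ← mul_assoc, ← Real.exp_add]
  simp [h2]

/-- The distributed consensus estimator: if `x` solves `x' = p - L x` with `x 0 = 0`,
where `L` is the Laplacian of a finite connected simple graph, then `x'(t)` converges,
as `t → +∞`, to the constant vector whose entries are the average `(∑ v, p v) / n`. -/
theorem stmt_2 {V : Type*} [Fintype V] [DecidableEq V] (G : SimpleGraph V)
    [DecidableRel G.Adj] (hG : G.Connected) (n : ℕ) (hn : n = Fintype.card V)
    (hn1 : 1 ≤ n) (p : V → ℝ) (x : ℝ → V → ℝ)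
    (hdiff : Differentiable ℝ x) (h0 : x 0 = 0)
    (hode : ∀ t : ℝ, 0 ≤ t → deriv x t = p - G.lapMatrix ℝ *ᵥ x t) :
    Tendsto (fun t : ℝ => deriv x t) atTop (nhds (fun _ : V => (∑ v, p v) / n)) := by
  have hL := G.isSymm_lapMatrix (R := ℝ)
  have hps := G.posSemidef_lapMatrix ℝ
  have hH : (G.lapMatrix ℝ).IsHermitian := hps.1
  let b := hH.eigenvectorBasis
  let ev := hH.eigenvalues
  let u : V → V → ℝ := fun i => (b i).ofLp
  have hu : ∀ i, G.lapMatrix ℝ *ᵥ u i = ev i • u i := fun i => hH.mulVec_eigenvectorBasis i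
  have hev : ∀ i, 0 ≤ ev i := fun i => hps.eigenvalues_nonneg i
  have hrepr : ∀ z : V → ℝ, z = ∑ i, (u i ⬝ᵥ z) • u i := by
    intro z
    have := congrArg WithLp.ofLp (b.sum_repr' (WithLp.toLp 2 z))
    simp only [WithLp.ofLp_sum, WithLp.ofLp_smul] at this
    refine this.symm.trans (Finset.sum_congr rfl fun i _ => ?_)
    rw [EuclideanSpace.inner_eq_star_dotProduct, star_trivial, dotProduct_comm]
  let c : V → ℝ := fun i => if ev i = 0 then u i ⬝ᵥ p else 0
  let q : V → ℝ := ∑ i, c i • u i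
  have hlim : Tendsto (fun t : ℝ => deriv x t) atTop (nhds q) := by
    have h1 : Tendsto (fun t : ℝ => ∑ i, (Real.exp (-(ev i * t)) * (u i ⬝ᵥ p)) • u i)
        atTop (nhds q) := by
      refine tendsto_finsetSum _ fun i _ => Tendsto.smul_const ?_ _
      by_cases h : ev i = 0
      · simp [c, h]
      · have hpos : 0 < ev i := lt_of_le_of_ne (hev i) (Ne.symm h)
        have : Tendsto (fun t : ℝ => Real.exp (-(ev i * t))) atTop (nhds 0) :=
          Real.tendsto_exp_neg_atTop_nhds_zero.comp (tendsto_id.const_mul_atTop hpos)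
        simpa [c, h] using this.mul_const (u i ⬝ᵥ p)
    refine h1.congr' ?_
    filter_upwards [eventually_ge_atTop 0] with t ht
    rw [hode t ht]
    conv_rhs => rw [hrepr (p - G.lapMatrix ℝ *ᵥ x t)]
    refine Finset.sum_congr rfl fun i _ => ?_
    rw [coord_decay _ hL p x hdiff h0 hode (u i) (ev i) (hu i) t ht]
  have hq0 : G.lapMatrix ℝ *ᵥ q = 0 := by
    simp only [q, mulVec_sum, mulVec_smul, hu]
    refine Finset.sum_eq_zero fun i _ => ?_
    by_cases h : ev i = 0 <;> simp [c, h]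
  have hqc := (G.lapMatrix_mulVec_eq_zero_iff_forall_reachable).1 hq0
  have hsum : ∑ v, q v = ∑ v, p v := by
    have h1 : Tendsto (fun t : ℝ => ∑ v, deriv x t v) atTop (nhds (∑ v, q v)) :=
      tendsto_finsetSum _ fun v _ => (tendsto_pi_nhds.1 hlim v)
    refine tendsto_nhds_unique h1 (tendsto_const_nhds.congr' ?_)
    filter_upwards [eventually_ge_atTop 0] with t ht
    have := coord_decay _ hL p x hdiff h0 hode (fun _ => 1) 0
      (by rw [G.lapMatrix_mulVec_const_eq_zero]; simp) t ht
    rw [← hode t ht] at this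
    simpa [dotProduct] using this.symm
  have : q = fun _ : V => (∑ v, p v) / n := by
    funext v
    have h1 : ∑ w, q w = n * q v := by
      rw [Finset.sum_congr rfl fun w _ => hqc w v (hG.preconnected w v)]
      simp [hn]
    have : (n : ℝ) ≠ 0 := by positivity
    rw [← hsum, h1]
    field_simp
  rw [← this]
  exact hlim
end

section
/- Let n ≥ 1, let H be a connected simple graph on the index set {1,…,n}, let p̄ ≥ 0, and let P : {1,…,n} → ℝ be monotone nondecreasing in the index (P_1 ≤ P_2 ≤ … ≤ P_n). If |P_l − P_m| ≤ p̄ for every pair of indices l, m adjacent in H, then P_{l+1} ≤ P_l + p̄ for every l ∈ {1,…,n−1}. -/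
/-- If the power imbalances, sorted in nondecreasing order of the island index, differ by at
most `pbar` across any edge of the connected condensed graph `H`, then consecutive
imbalances differ by at most `pbar`. -/
theorem stmt_6 (n : ℕ) (hn : 1 ≤ n) (H : SimpleGraph (Fin n)) (hH : H.Connected)
    (pbar : ℝ) (hpbar : 0 ≤ pbar) (P : Fin n → ℝ) (hmono : Monotone P)
    (hadj : ∀ l m : Fin n, H.Adj l m → |P l - P m| ≤ pbar) :
    ∀ l : Fin n, ∀ h : (l : ℕ) + 1 < n, P ⟨(l : ℕ) + 1, h⟩ ≤ P l + pbar := by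
  intro l h
  obtain ⟨p⟩ := hH.preconnected l ⟨(l : ℕ) + 1, h⟩
  obtain ⟨d, -, h1, h2⟩ := p.exists_boundary_dart {x : Fin n | x ≤ l} (show l ≤ l from le_refl l)
    (fun h0 => absurd (Fin.le_def.mp (show (⟨(l : ℕ) + 1, h⟩ : Fin n) ≤ l from h0)) (Nat.not_succ_le_self _))
  have h1' : d.fst ≤ l := h1
  have h2' : (⟨(l : ℕ) + 1, h⟩ : Fin n) ≤ d.snd := by
    have h3 : ¬ d.snd ≤ l := h2
    rw [Fin.le_def] at h3 ⊢
    simp only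
    omega
  have h4 := abs_le.mp (hadj _ _ d.adj)
  have h5 := hmono h1'
  have h6 := hmono h2'
  linarith [h4.1]
end

section
/- Let P_l, P_m, p be real numbers satisfying (P_l > P_m and p < 0) or (P_l < P_m and p > 0). Then min(P_l, P_m) < min(P_l + p, P_m − p) if and only if |P_m − P_l| > |p|. -/
/-- Under the sign hypothesis on the migrating node, the migration rule (the minimum of the
two neighboring imbalances strictly increases) is equivalent to the gap condition
`|P_m - P_l| > |p|`. -/
theorem stmt_9 (Pl Pm p : ℝ)
    (hsign : (Pl > Pm ∧ p < 0) ∨ (Pl < Pm ∧ p > 0)) :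
    min Pl Pm < min (Pl + p) (Pm - p) ↔ |Pm - Pl| > |p| := by
  rcases hsign with ⟨h1, h2⟩ | ⟨h1, h2⟩
  · rw [min_eq_right h1.le, abs_of_neg (by linarith : Pm - Pl < 0), abs_of_neg h2, lt_min_iff]
    constructor
    · rintro ⟨h, _⟩
      linarith
    · intro h
      constructor <;> linarith
  · rw [min_eq_left h1.le, abs_of_pos (by linarith : 0 < Pm - Pl), abs_of_pos h2, lt_min_iff]
    constructor
    · rintro ⟨_, h⟩
      linarith
    · intro h
      constructor <;> linarith
end

section
/- Let n ≥ 2, let P : {1,…,n} → ℝ, let l ≠ m be two indices, let p and c be real numbers, and define P' : {1,…,n} → ℝ by P'_l = P_l + p, P'_m = P_m − p, and P'_j = P_j for j ∉ {l, m}. If ((P_l > P_m and p < 0) or (P_l < P_m and p > 0)) and |P_m − P_l| > |p|, then the Euclidean norm of P' − c·𝟏 is strictly smaller than the Euclidean norm of P − c·𝟏, where 𝟏 is the all-ones vector. -/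
/-- A single migration strictly decreases the Euclidean distance of the imbalance vector
from any constant vector `c • 𝟏`. -/
theorem stmt_12 (n : ℕ) (hn : 2 ≤ n) (P P' : Fin n → ℝ) (l m : Fin n) (hlm : l ≠ m)
    (p c : ℝ)
    (hl : P' l = P l + p) (hm : P' m = P m - p)
    (hrest : ∀ j : Fin n, j ≠ l → j ≠ m → P' j = P j)
    (hsign : (P l > P m ∧ p < 0) ∨ (P l < P m ∧ p > 0))
    (hgap : |P m - P l| > |p|) :
    Real.sqrt (∑ j, (P' j - c) ^ 2) < Real.sqrt (∑ j, (P j - c) ^ 2) := by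
  apply Real.sqrt_lt_sqrt (Finset.sum_nonneg fun j _ => sq_nonneg _)
  have hmem : m ∈ Finset.univ.erase l := by simp [hlm.symm]
  have split : ∀ f : Fin n → ℝ,
      ∑ j, f j = f l + (f m + ∑ j ∈ (Finset.univ.erase l).erase m, f j) := by
    intro f
    rw [Finset.add_sum_erase _ f hmem, Finset.add_sum_erase _ f (Finset.mem_univ l)]
  rw [split, split fun j => (P j - c) ^ 2]
  have hr : ∑ j ∈ (Finset.univ.erase l).erase m, (P' j - c) ^ 2
      = ∑ j ∈ (Finset.univ.erase l).erase m, (P j - c) ^ 2 := by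
    refine Finset.sum_congr rfl fun j hj => ?_
    simp only [Finset.mem_erase, Finset.mem_univ, and_true] at hj
    rw [hrest j hj.2 hj.1]
  rw [hr, hl, hm]
  have key : p * (P l - P m + p) < 0 := by
    rcases hsign with ⟨h, hp⟩ | ⟨h, hp⟩
    · rw [abs_of_neg (by linarith), abs_of_neg hp] at hgap
      exact mul_neg_of_neg_of_pos hp (by linarith)
    · rw [abs_of_pos (by linarith), abs_of_pos hp] at hgap
      exact mul_neg_of_pos_of_neg hp (by linarith)
  nlinarith [key]
end

section
/- Let n ≥ 1 and let S be a finite set of vectors in ℝⁿ. There is no sequence P : ℕ → S such that for every k there exist indices l ≠ m in {1,…,n} and a real number p satisfying: ((P(k)_l > P(k)_m and p < 0) or (P(k)_l < P(k)_m and p > 0)), |P(k)_m − P(k)_l| > |p|, P(k+1)_l = P(k)_l + p, P(k+1)_m = P(k)_m − p, and P(k+1)_j = P(k)_j for all j ∉ {l, m}. Consequently, any sequence of such migration updates within S terminates after finitely many steps. -/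
/-- There is no infinite sequence of migration updates whose imbalance vectors all lie in a
finite set `S`: any such migration process terminates after finitely many steps. -/
theorem stmt_14 (n : ℕ) (hn : 1 ≤ n) (S : Set (Fin n → ℝ)) (hS : S.Finite) :
    ¬ ∃ P : ℕ → Fin n → ℝ, (∀ k, P k ∈ S) ∧
      ∀ k : ℕ, ∃ l m : Fin n, l ≠ m ∧ ∃ p : ℝ,
        ((P k l > P k m ∧ p < 0) ∨ (P k l < P k m ∧ p > 0)) ∧
        |P k m - P k l| > |p| ∧
        P (k + 1) l = P k l + p ∧
        P (k + 1) m = P k m - p ∧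
        ∀ j : Fin n, j ≠ l → j ≠ m → P (k + 1) j = P k j := by
  rintro ⟨P, hP, hstep⟩
  have hanti : StrictAnti (fun k => ∑ j, (P k j) ^ 2) := by
    apply strictAnti_nat_of_succ_lt
    intro k
    obtain ⟨l, m, hlm, p, hsign, hgap, hl, hm, hj⟩ := hstep k
    have hsum : ∑ j, ((P (k + 1) j) ^ 2 - (P k j) ^ 2)
        = ((P (k + 1) l) ^ 2 - (P k l) ^ 2) + ((P (k + 1) m) ^ 2 - (P k m) ^ 2) := by
      apply Fintype.sum_eq_add l m hlm
      rintro x ⟨h1, h2⟩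
      rw [hj x h1 h2, sub_self]
    rw [Finset.sum_sub_distrib, hl, hm] at hsum
    have hneg : p * (P k l - P k m + p) < 0 := by
      rcases hsign with ⟨h, hp⟩ | ⟨h, hp⟩
      · rw [abs_of_neg hp, abs_of_neg (by linarith)] at hgap
        exact mul_neg_of_neg_of_pos hp (by linarith)
      · rw [abs_of_pos hp, abs_of_pos (by linarith)] at hgap
        exact mul_neg_of_pos_of_neg hp (by linarith)
    show ∑ j, (P (k + 1) j) ^ 2 < ∑ j, (P k j) ^ 2
    nlinarith
  have hinj : Function.Injective P := by
    intro a b hab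
    apply hanti.injective
    simp only [hab]
  exact Set.infinite_of_injective_forall_mem hinj hP hS
end
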